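/- arXiv:2411.07090 — 2 statements merged into one kernel-verified Lean document; each statement's English description precedes it below -/
import Mathlib

section
/- Let r ≥ 3, let H be a T_r-free r-graph with δ⁺_{r-1}(H) ≥ r, and let e = {u_1,…,u_r} ∈ H be an edge. Then for every i ∈ [r], the neighborhood of the (r-1)-set e \ {u_i} is disjoint from the neighborhood of the vertex u_i, i.e. N_H(e \ {u_i}) ∩ N_H(u_i) = ∅. -/
variable {V : Type*} [Fintype V] [DecidableEq V]

/-- The (r-1)-shadow of an r-graph: all (r-1)-sets contained in some edge. -/
def sshadow (r : ℕ) (H : Finset (Finset V)) : Finset (Finset V) :=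
  Finset.univ.filter (fun e => e.card = r - 1 ∧ ∃ E ∈ H, e ⊆ E)

/-- The codegree neighborhood of a set `e`: vertices `v` with `e ∪ {v} ∈ H`. -/
def nbhd (H : Finset (Finset V)) (e : Finset V) : Finset V :=
  Finset.univ.filter (fun v => insert v e ∈ H)

/-- The neighborhood of a vertex. -/
def vnbhd (H : Finset (Finset V)) (v : V) : Finset V :=
  Finset.univ.filter (fun u => u ≠ v ∧ ∃ E ∈ H, u ∈ E ∧ v ∈ E)

/-- `H` is T_r-free. -/
def IsTrFree (r : ℕ) (H : Finset (Finset V)) : Prop :=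
  ¬ ∃ (S W : Finset V) (a b : V),
      S.card = r - 1 ∧ W.card = r - 2 ∧ a ≠ b ∧
      a ∉ S ∧ b ∉ S ∧ a ∉ W ∧ b ∉ W ∧ Disjoint S W ∧
      insert a S ∈ H ∧ insert b S ∈ H ∧ insert a (insert b W) ∈ H

/-- A set of vertices is independent. -/
def IsIndep (H : Finset (Finset V)) (I : Finset V) : Prop :=
  ∀ E ∈ H, (E ∩ I).card ≤ 1

/-- `H` is r-partite. -/
def IsRPartite (r : ℕ) (H : Finset (Finset V)) : Prop :=
  ∃ P : Fin r → Finset V, (∀ v : V, ∃! i, v ∈ P i) ∧ ∀ i, IsIndep H (P i)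

/-- Minimum positive codegree. -/
noncomputable def minPosCodeg (r : ℕ) (H : Finset (Finset V)) : ℕ :=
  sInf {k | ∃ e ∈ sshadow r H, (nbhd H e).card = k}

/-!
Suppose `v` lies in both neighborhoods, let `E` be an edge through `u` and `v`, and put
`S = e \ {u}`. The edges `S ∪ {u}` and `S ∪ {v}` are the first two edges of a copy of `T_r`, and
`E` would be the third if it avoided `S`. Since `|S| = r - 1` is smaller than every positive
codegree, any vertex of an edge lying in `S` can be exchanged for one outside `S`. As `u` and `v`
are not in `S`, such an exchange keeps both of them, so an edge through `u` and `v` meeting `S` in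
as few vertices as possible is disjoint from `S`.
-/

section

variable {r : ℕ} {H : Finset (Finset V)} {A E S : Finset V} {u v w : V}

lemma mem_nbhd : v ∈ nbhd H S ↔ insert v S ∈ H := by
  simp [nbhd]

lemma mem_vnbhd : u ∈ vnbhd H v ↔ u ≠ v ∧ ∃ E ∈ H, u ∈ E ∧ v ∈ E := by
  simp [vnbhd]

lemma mem_nbhd_erase (hE : E ∈ H) (hw : w ∈ E) : w ∈ nbhd H (E.erase w) := by
  rwa [mem_nbhd, Finset.insert_erase hw]

lemma notMem_of_mem_nbhd (hH : ∀ E ∈ H, E.card = r) (hS : S.card ≠ r) (hv : v ∈ nbhd H S) :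
    v ∉ S := fun hvS ↦
  hS (hH S (by rwa [mem_nbhd, Finset.insert_eq_of_mem hvS] at hv))

lemma erase_mem_sshadow (hE : E ∈ H) (hEr : E.card = r) (hw : w ∈ E) :
    E.erase w ∈ sshadow r H := by
  simp only [sshadow, Finset.mem_filter, Finset.mem_univ, true_and]
  exact ⟨by rw [Finset.card_erase_of_mem hw, hEr], E, hE, Finset.erase_subset w E⟩

lemma exists_notMem_insert_erase_mem (hE : E ∈ H) (hEr : E.card = r) (hw : w ∈ E)
    (hdeg : ∀ f ∈ sshadow r H, S.card < (nbhd H f).card) :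
    ∃ x ∉ S, insert x (E.erase w) ∈ H := by
  obtain ⟨x, hx, hxS⟩ :=
    Finset.exists_mem_notMem_of_card_lt_card (hdeg _ (erase_mem_sshadow hE hEr hw))
  exact ⟨x, hxS, mem_nbhd.1 hx⟩

lemma exists_edge_superset_disjoint (hH : ∀ E ∈ H, E.card = r)
    (hdeg : ∀ f ∈ sshadow r H, S.card < (nbhd H f).card)
    (hE : E ∈ H) (hAE : A ⊆ E) (hAS : Disjoint A S) :
    ∃ F ∈ H, A ⊆ F ∧ Disjoint F S := by
  obtain ⟨F, hF, hmin⟩ := Finset.exists_min_image {F ∈ H | A ⊆ F} (fun F ↦ (F ∩ S).card)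
    ⟨E, Finset.mem_filter.2 ⟨hE, hAE⟩⟩
  obtain ⟨hFH, hAF⟩ := Finset.mem_filter.1 hF
  refine ⟨F, hFH, hAF, Finset.disjoint_left.2 fun w hwF hwS ↦ ?_⟩
  obtain ⟨x, hxS, hxH⟩ := exists_notMem_insert_erase_mem hFH (hH F hFH) hwF hdeg
  have hwA : w ∉ A := Finset.disjoint_right.1 hAS hwS
  have hAx : A ⊆ insert x (F.erase w) :=
    (Finset.subset_erase.2 ⟨hAF, hwA⟩).trans (Finset.subset_insert x _)
  have hlt : (insert x (F.erase w) ∩ S).card < (F ∩ S).card := by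
    rw [Finset.insert_inter_of_notMem hxS, Finset.erase_inter]
    exact Finset.card_erase_lt_of_mem (Finset.mem_inter.2 ⟨hwF, hwS⟩)
  exact (hmin _ (Finset.mem_filter.2 ⟨hxH, hAx⟩)).not_gt hlt

lemma IsTrFree.not_disjoint (hfree : IsTrFree r H) (hS : S.card = r - 1) (huv : u ≠ v)
    (hu : u ∈ nbhd H S) (hv : v ∈ nbhd H S)
    (hE : E ∈ H) (hEr : E.card = r) (huE : u ∈ E) (hvE : v ∈ E) : ¬ Disjoint E S := by
  intro hES
  have hvE' : v ∈ E.erase u := Finset.mem_erase.2 ⟨huv.symm, hvE⟩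
  refine hfree ⟨S, (E.erase u).erase v, u, v, hS, ?_, huv,
    Finset.disjoint_left.1 hES huE, Finset.disjoint_left.1 hES hvE,
    fun h ↦ Finset.notMem_erase u E (Finset.mem_of_mem_erase h), Finset.notMem_erase v _,
    ?_, mem_nbhd.1 hu, mem_nbhd.1 hv, ?_⟩
  · rw [Finset.card_erase_of_mem hvE', Finset.card_erase_of_mem huE, hEr, Nat.sub_sub]
  · exact hES.symm.mono_right ((Finset.erase_subset v _).trans (Finset.erase_subset u E))
  · rwa [Finset.insert_erase hvE', Finset.insert_erase huE]

end

/-- Let `H` be a `T_r`-free `r`-graph with minimum positive codegree at least `r`, and let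
`e ∈ H` be an edge. Then for every `u ∈ e`, the codegree neighborhood of `e \\ {u}` is
disjoint from the neighborhood of the vertex `u`. -/
theorem stmt3 {V : Type*} [Fintype V] [DecidableEq V] {r : ℕ} (hr : 3 ≤ r)
    {H : Finset (Finset V)} (hH : ∀ E ∈ H, E.card = r)
    (hfree : IsTrFree r H)
    (hdeg : ∀ e ∈ sshadow r H, r ≤ (nbhd H e).card)
    {e : Finset V} (he : e ∈ H) {u : V} (hu : u ∈ e) :
    nbhd H (e.erase u) ∩ vnbhd H u = ∅ := by
  rw [← Finset.disjoint_iff_inter_eq_empty, Finset.disjoint_left]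
  intro v hv huv
  obtain ⟨hvu, E, hE, hvE, huE⟩ := mem_vnbhd.1 huv
  have hcard : (e.erase u).card = r - 1 := by rw [Finset.card_erase_of_mem hu, hH e he]
  have hlt : (e.erase u).card < r := hH e he ▸ Finset.card_erase_lt_of_mem hu
  have hvS : v ∉ e.erase u := notMem_of_mem_nbhd hH hlt.ne hv
  obtain ⟨F, hF, huvF, hdisj⟩ : ∃ F ∈ H, {u, v} ⊆ F ∧ Disjoint F (e.erase u) :=
    exists_edge_superset_disjoint hH (fun f hf ↦ hlt.trans_le (hdeg f hf)) hE
      (Finset.insert_subset huE (Finset.singleton_subset_iff.2 hvE))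
      (Finset.disjoint_insert_left.2
        ⟨Finset.notMem_erase u e, Finset.disjoint_singleton_left.2 hvS⟩)
  obtain ⟨huF, hvF⟩ : u ∈ F ∧ v ∈ F := by
    rwa [Finset.insert_subset_iff, Finset.singleton_subset_iff] at huvF
  exact hfree.not_disjoint hcard hvu.symm (mem_nbhd_erase he hu) hv hF (hH F hF) huF hvF hdisj
end

section
/- Let r ≥ 3 and let (x_1, …, x_{r-2}, y_1, …, y_5) be a tuple of positive integers. Then the blowup W_5^r[x_1, …, x_{r-2}, y_1, …, y_5] of the r-uniform 5-wheel is T_r-free and is not r-partite. -/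
variable {V : Type*} [Fintype V] [DecidableEq V]

/-- Vertex type of the blowup of the r-uniform 5-wheel, with u-parts of sizes `x i`
and v-parts of sizes `y j`. -/
abbrev WheelVert (r : ℕ) (x : Fin (r - 2) → ℕ) (y : Fin 5 → ℕ) : Type :=
  (Σ i : Fin (r - 2), Fin (x i)) ⊕ (Σ j : Fin 5, Fin (y j))

/-- The part containing a given vertex of the blowup. -/
def wpart {r : ℕ} {x : Fin (r - 2) → ℕ} {y : Fin 5 → ℕ} :
    WheelVert r x y → Fin (r - 2) ⊕ Fin 5
  | Sum.inl a => Sum.inl a.1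
  | Sum.inr b => Sum.inr b.1

/-- The blowup `W_5^r[x_1, …, x_{r-2}, y_1, …, y_5]` of the r-uniform 5-wheel:
edges are all r-sets having exactly one vertex in each u-part and exactly one vertex in
each of two (cyclically) consecutive v-parts. -/
def blowupW5 (r : ℕ) (x : Fin (r - 2) → ℕ) (y : Fin 5 → ℕ) :
    Finset (Finset (WheelVert r x y)) :=
  Finset.univ.filter (fun E =>
    ∃ j : Fin 5,
      (∀ i : Fin (r - 2), (E.filter (fun a => wpart a = Sum.inl i)).card = 1) ∧
      (E.filter (fun a => wpart a = Sum.inr j)).card = 1 ∧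
      (E.filter (fun a => wpart a = Sum.inr (j + 1))).card = 1 ∧
      (∀ j' : Fin 5, j' ≠ j → j' ≠ j + 1 →
        (E.filter (fun a => wpart a = Sum.inr j')).card = 0))

/-!
The wheel is the cone over `G = C₅`: each of its edges consists of the apices `u₁, …, u_{r-2}` and
an edge of `G`. Both claims hold for blowups of the cone over any
triangle-free `G` that is not 2-colourable.

In a copy of `T_r`, two edges `S ∪ {a}` and `S ∪ {b}` differ only in `a` and `b`, and a third edge
contains both. In a cone this forces `a` and `b` to be adjacent vertices of `G` with a common
neighbour in `S`, hence a triangle. The configuration survives projecting a blowup to its pattern.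

An `r`-partition is a colouring with `r` colours that is injective on edges. On a cone each edge
sees every colour, so the edges of `G` all see a colour `s` missed by the `uᵢ`, and exactly one end
of each edge has colour `s`: this is a 2-colouring of `G`.
-/

open Finset

section Partite

variable {α : Type*} [Finite α] [DecidableEq α]

lemma isRPartite_iff_exists_injOn {r : ℕ} {H : Finset (Finset α)} :
    IsRPartite r H ↔ ∃ c : α → Fin r, ∀ E ∈ H, Set.InjOn c E := by
  constructor
  · rintro ⟨P, hP, hI⟩
    choose c hc _ using hP
    refine ⟨c, fun E hE a ha b hb hab => ?_⟩
    exact card_le_one.1 (hI (c a) E hE) a (mem_inter.2 ⟨ha, hc a⟩) b (mem_inter.2 ⟨hb, hab ▸ hc b⟩)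
  · rintro ⟨c, hc⟩
    have := Fintype.ofFinite α
    refine ⟨fun i => {v | c v = i}, fun v => by simp, fun i E hE => card_le_one.2 ?_⟩
    simp only [mem_inter, mem_filter_univ]
    rintro a ⟨ha, rfl⟩ b ⟨hb, hab⟩
    exact hc E hE ha hb hab.symm

end Partite

section SigmaFree

variable {α : Type*} [DecidableEq α]

/-- Freeness from the family `Σ_r` of Bollobás and of Frankl and Füredi: no edge contains both
vertices in which two edges `S ∪ {a}` and `S ∪ {b}` differ. The family contains `T_r`. Since the
third edge may also meet `S`, the property passes to blowups. -/
def IsSigmaFree (H : Finset (Finset α)) : Prop :=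
  ∀ ⦃S : Finset α⦄ ⦃a b : α⦄, a ∉ S → b ∉ S → a ≠ b → insert a S ∈ H → insert b S ∈ H →
    ∀ E ∈ H, a ∈ E → b ∉ E

lemma IsSigmaFree.isTrFree {H : Finset (Finset α)} (hH : IsSigmaFree H) (r : ℕ) :
    IsTrFree r H := by
  rintro ⟨S, W, a, b, -, -, hab, ha, hb, -, -, -, haS, hbS, habW⟩
  exact hH ha hb hab haS hbS _ habW (mem_insert_self _ _) (by simp)

end SigmaFree

section Blowup

variable {α β : Type*} [DecidableEq β]

lemma card_filter_eq_ite_iff (f : α → β) (E : Finset α) (T : Finset β) :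
    (∀ p, #{a ∈ E | f a = p} = if p ∈ T then 1 else 0) ↔ Set.InjOn f E ∧ E.image f = T := by
  constructor
  · intro h
    constructor
    · intro a ha b hb hab
      have hcard : #{v ∈ E | f v = f b} ≤ 1 := by rw [h]; split_ifs <;> simp
      exact card_le_one.1 hcard a (mem_filter.2 ⟨ha, hab⟩) b (mem_filter.2 ⟨hb, rfl⟩)
    · ext p
      rw [← fiber_card_ne_zero_iff_mem_image, h]
      simp
  · rintro ⟨hf, rfl⟩ p
    split_ifs with hp
    · obtain ⟨a, ha, rfl⟩ := mem_image.1 hp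
      refine card_eq_one.2 ⟨a, ?_⟩
      ext b
      simp only [mem_filter, mem_singleton]
      exact ⟨fun hb => hf hb.1 ha hb.2, by rintro rfl; exact ⟨ha, rfl⟩⟩
    · by_contra hne
      exact hp ((fiber_card_ne_zero_iff_mem_image E f p).1 hne)

variable [Fintype α]

/-- The blowup of the hypergraph `H` on `β` in which the vertex `p` is replaced by the fibre
`f ⁻¹' {p}`: the edges are the sets mapped bijectively by `f` onto an edge of `H`. -/
def vertexBlowup (f : α → β) (H : Finset (Finset β)) : Finset (Finset α) :=
  univ.filter fun E => Set.InjOn f E ∧ E.image f ∈ H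

variable {f : α → β} {H : Finset (Finset β)}

lemma mem_vertexBlowup {E : Finset α} :
    E ∈ vertexBlowup f H ↔ Set.InjOn f E ∧ E.image f ∈ H :=
  mem_filter_univ E

lemma insert_mem_vertexBlowup [DecidableEq α] {S : Finset α} {a : α} (ha : a ∉ S) :
    insert a S ∈ vertexBlowup f H ↔
      Set.InjOn f S ∧ f a ∉ S.image f ∧ insert (f a) (S.image f) ∈ H := by
  rw [mem_vertexBlowup, coe_insert, Set.injOn_insert (mem_coe.not.2 ha), image_insert,
    ← coe_image, mem_coe, and_assoc]

lemma IsSigmaFree.vertexBlowup [DecidableEq α] (hH : IsSigmaFree H) :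
    IsSigmaFree (vertexBlowup f H) := by
  intro S a b ha hb hab haS hbS E hE haE hbE
  obtain ⟨-, hfa, hfaS⟩ := (insert_mem_vertexBlowup ha).1 haS
  obtain ⟨-, hfb, hfbS⟩ := (insert_mem_vertexBlowup hb).1 hbS
  obtain ⟨hinj, hfE⟩ := mem_vertexBlowup.1 hE
  exact hH hfa hfb (hinj.ne haE hbE hab) hfaS hfbS _ hfE (mem_image_of_mem f haE)
    (mem_image_of_mem f hbE)

lemma IsRPartite.of_vertexBlowup [DecidableEq α] [Finite β] {r : ℕ} (hf : f.Surjective)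
    (h : IsRPartite r (vertexBlowup f H)) : IsRPartite r H := by
  obtain ⟨c, hc⟩ := isRPartite_iff_exists_injOn.1 h
  obtain ⟨g, hg⟩ := hf.hasRightInverse
  refine isRPartite_iff_exists_injOn.2 ⟨c ∘ g, fun E hE => ?_⟩
  have hgE : E.image g ∈ vertexBlowup f H := by
    refine mem_vertexBlowup.2 ⟨?_, ?_⟩
    · rw [coe_image]
      exact (hg.id ▸ Set.injOn_id _ : Set.InjOn (f ∘ g) E).image_of_comp
    · rwa [image_image, hg.id, image_id]
  exact (hc _ hgE).comp hg.injective.injOn fun p hp => mem_image_of_mem g hp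

end Blowup

section Cone

variable (ι : Type*) {κ : Type*} [Fintype ι] [DecidableEq ι] [Fintype κ] [DecidableEq κ]

/-- The cone over the graph `G` with set of apices `ι`: the hypergraph whose edges are the sets
`ι ∪ {j, k}` with `jk` an edge of `G`. The wheel `W_5^r` is the case of `r - 2` apices and
`G = C₅`. -/
def graphCone (G : SimpleGraph κ) [DecidableRel G.Adj] : Finset (Finset (ι ⊕ κ)) :=
  univ.filter fun E => ∃ j k, G.Adj j k ∧ E = univ.disjSum {j, k}

variable {ι} {G : SimpleGraph κ} [DecidableRel G.Adj]

lemma mem_graphCone {E : Finset (ι ⊕ κ)} :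
    E ∈ graphCone ι G ↔ ∃ j k, G.Adj j k ∧ E = univ.disjSum {j, k} :=
  mem_filter_univ E

lemma inl_mem_of_mem_graphCone {E : Finset (ι ⊕ κ)} (hE : E ∈ graphCone ι G) (i : ι) :
    Sum.inl i ∈ E := by
  obtain ⟨j, k, -, rfl⟩ := mem_graphCone.1 hE
  simp

lemma adj_of_mem_graphCone {E : Finset (ι ⊕ κ)} (hE : E ∈ graphCone ι G) {u v : κ} (huv : u ≠ v)
    (hu : Sum.inr u ∈ E) (hv : Sum.inr v ∈ E) : G.Adj u v := by
  obtain ⟨j, k, hjk, rfl⟩ := mem_graphCone.1 hE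
  simp only [inr_mem_disjSum, mem_insert, mem_singleton] at hu hv
  grind [hjk.symm]

lemma exists_adj_of_mem_graphCone {E : Finset (ι ⊕ κ)} (hE : E ∈ graphCone ι G) {u : κ}
    (hu : Sum.inr u ∈ E) : ∃ w, Sum.inr w ∈ E ∧ G.Adj u w := by
  obtain ⟨j, k, hjk, rfl⟩ := mem_graphCone.1 hE
  obtain rfl | rfl : u = j ∨ u = k := by simpa using hu
  · exact ⟨k, by simp, hjk⟩
  · exact ⟨j, by simp, hjk.symm⟩

lemma isSigmaFree_graphCone (hG : G.CliqueFree 3) : IsSigmaFree (graphCone ι G) := by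
  intro S a b ha hb hab haS hbS E hE haE hbE
  rcases a with i | u
  · exact (mem_insert.1 (inl_mem_of_mem_graphCone hbS i)).elim hab ha
  rcases b with i | v
  · exact (mem_insert.1 (inl_mem_of_mem_graphCone haS i)).elim hab.symm hb
  have huv : G.Adj u v := adj_of_mem_graphCone hE (by simpa using hab) haE hbE
  obtain ⟨w, hw, huw⟩ := exists_adj_of_mem_graphCone haS (mem_insert_self _ _)
  replace hw : Sum.inr w ∈ S := mem_of_mem_insert_of_ne hw (by simpa using huw.ne')
  have hvw : G.Adj v w := adj_of_mem_graphCone hbS (by rintro rfl; exact hb hw)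
    (mem_insert_self _ _) (mem_insert_of_mem hw)
  exact hG _ (SimpleGraph.is3Clique_triple_iff.2 ⟨huv, huw, hvw⟩)

lemma IsRPartite.colorable_two_of_graphCone
    (h : IsRPartite (Fintype.card ι + 2) (graphCone ι G)) : G.Colorable 2 := by
  obtain ⟨c, hc⟩ := isRPartite_iff_exists_injOn.1 h
  obtain ⟨s, hs⟩ : ∃ s, ∀ i, c (Sum.inl i) ≠ s := by
    by_contra! hsurj
    simpa using Fintype.card_le_of_surjective _ hsurj
  have one_end : ∀ {j k}, G.Adj j k → (c (Sum.inr j) = s ↔ ¬ c (Sum.inr k) = s) := by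
    intro j k hjk
    have hinj := hc _ (mem_graphCone.2 ⟨j, k, hjk, rfl⟩)
    have himage : (univ.disjSum {j, k} : Finset (ι ⊕ κ)).image c = univ := by
      rw [← card_eq_iff_eq_univ, card_image_of_injOn hinj, card_disjSum, card_pair hjk.ne,
        card_univ, Fintype.card_fin]
    constructor
    · intro hj hk
      have hjk' := hinj (by simp) (by simp) (hj.trans hk.symm)
      exact hjk.ne (Sum.inr_injective hjk')
    · intro hk
      have hs' := himage ▸ mem_univ s
      simpa [hs, hk] using hs'
  let color : G.Coloring Bool := SimpleGraph.Coloring.mk (fun j => decide (c (Sum.inr j) = s)) <| by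
    intro j k hjk
    simp [one_end hjk]
  exact color.colorable

end Cone

theorem stmt12_general {α ι κ : Type*} [Fintype α] [DecidableEq α] [Fintype ι] [DecidableEq ι]
    [Fintype κ] [DecidableEq κ] {G : SimpleGraph κ} [DecidableRel G.Adj] (hG₃ : G.CliqueFree 3)
    (hG₂ : ¬ G.Colorable 2) {f : α → ι ⊕ κ} (hf : f.Surjective) :
    IsTrFree (Fintype.card ι + 2) (vertexBlowup f (graphCone ι G)) ∧
      ¬ IsRPartite (Fintype.card ι + 2) (vertexBlowup f (graphCone ι G)) :=
  ⟨(isSigmaFree_graphCone hG₃).vertexBlowup.isTrFree _,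
    fun h => hG₂ (h.of_vertexBlowup hf).colorable_two_of_graphCone⟩

section Wheel

open SimpleGraph

lemma cliqueFree_three_cycleGraph_five : (cycleGraph 5).CliqueFree 3 := by
  intro s hs
  obtain ⟨a, b, c, hab, hac, hbc, -⟩ := is3Clique_iff.1 hs
  revert a b c
  decide

lemma not_colorable_two_cycleGraph_of_odd {n : ℕ} (hn : 2 ≤ n) (hodd : Odd n) :
    ¬ (cycleGraph n).Colorable 2 := by
  intro h
  have hchi := h.chromaticNumber_le
  rw [chromaticNumber_cycleGraph_of_odd n hn hodd] at hchi
  exact absurd hchi (by decide)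

lemma mem_graphCone_cycleGraph {ι : Type*} [Fintype ι] [DecidableEq ι] {n : ℕ}
    {E : Finset (ι ⊕ Fin (n + 2))} :
    E ∈ graphCone ι (cycleGraph (n + 2)) ↔ ∃ j, E = univ.disjSum {j, j + 1} := by
  simp only [mem_graphCone, cycleGraph_adj, sub_eq_iff_eq_add']
  constructor
  · rintro ⟨j, k, rfl | rfl, rfl⟩
    · exact ⟨k, by rw [pair_comm]⟩
    · exact ⟨j, rfl⟩
  · rintro ⟨j, rfl⟩
    exact ⟨j, j + 1, .inr rfl, rfl⟩

variable {r : ℕ} {x : Fin (r - 2) → ℕ} {y : Fin 5 → ℕ}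

lemma wpart_surjective (hx : ∀ i, 0 < x i) (hy : ∀ j, 0 < y j) :
    (wpart : WheelVert r x y → _).Surjective
  | .inl i => ⟨.inl ⟨i, 0, hx i⟩, rfl⟩
  | .inr j => ⟨.inr ⟨j, 0, hy j⟩, rfl⟩

lemma blowupW5_eq_vertexBlowup :
    blowupW5 r x y = vertexBlowup wpart (graphCone (Fin (r - 2)) (cycleGraph 5)) := by
  ext E
  rw [mem_vertexBlowup, mem_graphCone_cycleGraph, ← exists_and_left, blowupW5, mem_filter_univ]
  refine exists_congr fun j => ?_
  rw [← card_filter_eq_ite_iff, Sum.forall]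
  simp only [inl_mem_disjSum, mem_univ, if_true, inr_mem_disjSum, mem_insert, mem_singleton]
  refine and_congr_right fun _ => ?_
  constructor
  · rintro ⟨hj, hj', hother⟩ k
    split_ifs with hk
    · rcases hk with rfl | rfl <;> assumption
    · exact hother k (fun h => hk (.inl h)) fun h => hk (.inr h)
  · intro h
    exact ⟨by simp [h], by simp [h], fun k hk hk' => by simp [h, hk, hk']⟩

end Wheel

/-- For `r ≥ 3` and positive part sizes, the blowup of the `r`-uniform `5`-wheel is
`T_r`-free and is not `r`-partite. -/
theorem stmt12 {r : ℕ} (hr : 3 ≤ r) (x : Fin (r - 2) → ℕ) (y : Fin 5 → ℕ)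
    (hx : ∀ i, 0 < x i) (hy : ∀ j, 0 < y j) :
    IsTrFree r (blowupW5 r x y) ∧ ¬ IsRPartite r (blowupW5 r x y) := by
  rw [blowupW5_eq_vertexBlowup]
  have h := stmt12_general cliqueFree_three_cycleGraph_five
    (not_colorable_two_cycleGraph_of_odd (by decide) (by decide)) (wpart_surjective hx hy)
  rwa [Fintype.card_fin, Nat.sub_add_cancel (Nat.le_of_succ_le hr)] at h
end
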